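/- arXiv:2508.19211 — 2 statements merged into one kernel-verified Lean document; each statement's English description precedes it below -/
import Mathlib

section
/- Let ℓ be a prime with ℓ odd or ζ_4 ∈ K, and ℓ ≠ char(K). Let t ≥ 1 be the largest integer such that ζ_{ℓ^t} ∈ K(ζ_{2𝒫}) (or t = ∞), and let w ≥ 0 be the largest integer such that ζ_{ℓ^w} ∈ K (setting w = 0 if ζ_ℓ ∉ K), assumed finite. Then K(ζ_{2𝒫}) ∩ √[ℓ^∞]{K^×} ⊆ ⟨ζ_{ℓ^{t+w}}, √[ℓ^w]{K^×}⟩, and K(ζ_{2𝒫}) ∩ K(√[ℓ^∞]{K^×}) = K(K(ζ_{2𝒫}) ∩ √[ℓ^∞]{K^×}), i.e., the intersection field is generated over K by the radicals of ℓ-power order that lie in K(ζ_{2𝒫}). -/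
noncomputable section

open IntermediateField

/-- `K^×` viewed as a subgroup of the units of the algebraic closure of `K`. -/
def baseUnits (K : Type*) [Field K] : Subgroup (AlgebraicClosure K)ˣ :=
  (Units.map (algebraMap K (AlgebraicClosure K)).toMonoidHom).range

/-- The subgroup of `(AlgebraicClosure K)ˣ` of elements whose `m`-th power lies in `K^×`. -/
def radGroup (K : Type*) [Field K] (m : ℕ) : Subgroup (AlgebraicClosure K)ˣ where
  carrier := {x | ∃ y : K, algebraMap K (AlgebraicClosure K) y = (x : AlgebraicClosure K) ^ m}
  one_mem' := ⟨1, by simp⟩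
  mul_mem' := by
    rintro a b ⟨y, hy⟩ ⟨z, hz⟩
    exact ⟨y * z, by rw [map_mul, hy, hz, Units.val_mul, mul_pow]⟩
  inv_mem' := by
    rintro a ⟨y, hy⟩
    refine ⟨y⁻¹, ?_⟩
    rw [map_inv₀, hy, Units.val_inv_eq_inv_val, inv_pow]

lemma radGroup_le (K : Type*) [Field K] {m k : ℕ} :
    radGroup K m ≤ radGroup K (m * k) := by
  rintro x ⟨y, hy⟩
  exact ⟨y ^ k, by rw [map_pow, hy, ← pow_mul]⟩

/-- The group `√[ℓ^∞]{K^×}` of radicals of `ℓ`-power order over `K`. -/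
def radInf (K : Type*) [Field K] (ℓ : ℕ) : Subgroup (AlgebraicClosure K)ˣ where
  carrier := {x | ∃ n : ℕ, x ∈ radGroup K (ℓ ^ n)}
  one_mem' := ⟨0, one_mem _⟩
  mul_mem' := by
    rintro a b ⟨n, ha⟩ ⟨m, hb⟩
    refine ⟨n + m, mul_mem ?_ ?_⟩
    · have h : radGroup K (ℓ ^ n) ≤ radGroup K (ℓ ^ (n + m)) := by
        rw [pow_add]; exact radGroup_le K
      exact h ha
    · have h : radGroup K (ℓ ^ m) ≤ radGroup K (ℓ ^ (n + m)) := by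
        rw [add_comm, pow_add]; exact radGroup_le K
      exact h hb
  inv_mem' := by
    rintro a ⟨n, ha⟩
    exact ⟨n, inv_mem ha⟩

/-- The units of the algebraic closure lying in an intermediate field `F`, as a subgroup. -/
def unitsIn {K : Type*} [Field K] (F : IntermediateField K (AlgebraicClosure K)) :
    Subgroup (AlgebraicClosure K)ˣ where
  carrier := {x | (x : AlgebraicClosure K) ∈ F}
  one_mem' := by
    show ((1 : (AlgebraicClosure K)ˣ) : AlgebraicClosure K) ∈ F
    simpa using one_mem F
  mul_mem' := by
    intro a b ha hb
    show ((a * b : (AlgebraicClosure K)ˣ) : AlgebraicClosure K) ∈ F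
    rw [Units.val_mul]
    exact mul_mem ha hb
  inv_mem' := by
    intro x hx
    show ((x⁻¹ : (AlgebraicClosure K)ˣ) : AlgebraicClosure K) ∈ F
    rw [Units.val_inv_eq_inv_val]
    exact inv_mem hx

/-- `K(ζ_{2𝒫})`: the extension of `K` generated by all roots of unity whose order is `4` or
an odd prime, and not divisible by the characteristic of `K`. -/
def cyclo2P (K : Type*) [Field K] : IntermediateField K (AlgebraicClosure K) :=
  IntermediateField.adjoin K
    {x : AlgebraicClosure K |
      ∃ n : ℕ, (n = 4 ∨ (n.Prime ∧ Odd n)) ∧ ¬ (ringChar K ∣ n) ∧ IsPrimitiveRoot x n}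

/-- The set of roots of unity of order exactly `n` in the algebraic closure of `K`. -/
def primRoots (K : Type*) [Field K] (n : ℕ) : Set (AlgebraicClosure K) :=
  {x | IsPrimitiveRoot x n}

/-- The set of roots of unity of order `ℓ^n` for `n ≤ t` (all of them if `t = ∞`). -/
def pPowRoots (K : Type*) [Field K] (ℓ : ℕ) (t : ℕ∞) : Set (AlgebraicClosure K) :=
  {x | ∃ n : ℕ, (n : ℕ∞) ≤ t ∧ IsPrimitiveRoot x (ℓ ^ n)}

/-- The set of units that are roots of unity of order `ℓ^n` for `n ≤ t`. -/
def pPowRootsUnits (K : Type*) [Field K] (ℓ : ℕ) (t : ℕ∞) : Set (AlgebraicClosure K)ˣ :=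
  {x | ∃ n : ℕ, (n : ℕ∞) ≤ t ∧ IsPrimitiveRoot (x : AlgebraicClosure K) (ℓ ^ n)}


lemma aux_fixed_mem {K : Type*} [Field K] (E : IntermediateField K (AlgebraicClosure K))
    (y : AlgebraicClosure K) (hs : IsSeparable K y)
    (h : ∀ σ : AlgebraicClosure K ≃ₐ[K] AlgebraicClosure K, (∀ e ∈ E, σ e = e) → σ y = y) :
    y ∈ E := by
  by_contra hy
  have hs' : IsSeparable E y := IsSeparable.tower_top E hs
  have h1 : y ∉ (⊥ : Subalgebra E (AlgebraicClosure K)) := by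
    intro hb
    rw [Algebra.mem_bot] at hb
    obtain ⟨e, rfl⟩ := hb
    exact hy e.2
  rw [notMem_iff_exists_ne_and_isConjRoot hs' (IsAlgClosed.splits _)] at h1
  obtain ⟨z, hz, hc⟩ := h1
  have : Normal E (AlgebraicClosure K) := inferInstance
  obtain ⟨σ, hσ⟩ := isConjRoot_iff_exists_algEquiv.1 hc.symm
  apply hz
  have := h (σ.restrictScalars K) (fun e he => σ.commutes ⟨e, he⟩)
  rw [← hσ]
  exact this.symm

lemma aux_ne {K : Type*} [Field K] {ℓ : ℕ} (hℓ : ℓ.Prime) (hchar : ringChar K ≠ ℓ) :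
    (ℓ : K) ≠ 0 := by
  intro h
  have h1 := (ringChar.spec K ℓ).1 h
  rcases (Nat.dvd_prime hℓ).1 h1 with h2 | h2
  · have := CharP.ringChar_ne_one (R := K)
    exact this h2
  · exact hchar h2

lemma aux_sep {K : Type*} [Field K] {ℓ : ℕ} (hK : (ℓ : K) ≠ 0) (n : ℕ)
    (x : AlgebraicClosure K) (hx : x ≠ 0) (y : K)
    (hy : algebraMap K (AlgebraicClosure K) y = x ^ (ℓ ^ n)) : IsSeparable K x := by
  have hy0 : y ≠ 0 := by
    rintro rfl
    rw [map_zero] at hy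
    exact pow_ne_zero _ hx hy.symm
  have h1 : (Polynomial.X ^ (ℓ ^ n) - Polynomial.C y : Polynomial K).Separable :=
    Polynomial.separable_X_pow_sub_C y (by push_cast; exact pow_ne_zero _ hK) hy0
  refine h1.of_dvd (minpoly.dvd _ _ ?_)
  simp [hy]

lemma aux_prim {K : Type*} [Field K] {ℓ : ℕ} (hK : (ℓ : K) ≠ 0) (n : ℕ) :
    ∃ Z : AlgebraicClosure K, IsPrimitiveRoot Z (ℓ ^ n) := by
  have : NeZero ((ℓ ^ n : ℕ) : AlgebraicClosure K) := ⟨by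
    push_cast
    apply pow_ne_zero
    rw [← map_natCast (algebraMap K (AlgebraicClosure K))]
    exact (map_ne_zero _).2 hK⟩
  exact HasEnoughRootsOfUnity.exists_primitiveRoot _ _

lemma aux_order {M : Type*} [CommMonoid M] {ℓ : ℕ} (hℓ : ℓ.Prime) {n : ℕ} {z : M}
    (hz : z ^ (ℓ ^ n) = 1) : ∃ s ≤ n, IsPrimitiveRoot z (ℓ ^ s) := by
  obtain ⟨s, hs, h⟩ := (Nat.dvd_prime_pow hℓ).1 (orderOf_dvd_of_pow_eq_one hz)
  exact ⟨s, hs, h ▸ IsPrimitiveRoot.orderOf z⟩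

lemma aux_pow {K : Type*} [Field K] (m : ℕ) [NeZero m] (Z : AlgebraicClosure K)
    (hZ : IsPrimitiveRoot Z m)
    (σ : AlgebraicClosure K ≃ₐ[K] AlgebraicClosure K) :
    ∃ k : ℕ, ∀ z : AlgebraicClosure K, z ^ m = 1 → σ z = z ^ k := by
  have : (σ Z) ^ m = 1 := by rw [← map_pow, hZ.pow_eq_one, map_one]
  obtain ⟨k, -, hk⟩ := hZ.eq_pow_of_pow_eq_one this
  refine ⟨k, fun z hz => ?_⟩
  obtain ⟨i, -, rfl⟩ := hZ.eq_pow_of_pow_eq_one hz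
  rw [map_pow, ← hk, ← pow_mul, ← pow_mul, mul_comm]

lemma aux_stable {K : Type*} [Field K]
    (σ : AlgebraicClosure K ≃ₐ[K] AlgebraicClosure K) (x : AlgebraicClosure K)
    (hx : x ∈ cyclo2P K) : σ x ∈ cyclo2P K := by
  unfold cyclo2P at hx
  induction hx using IntermediateField.adjoin_induction with
  | mem x hx =>
    obtain ⟨n, h1, h2, h3⟩ := hx
    exact IntermediateField.subset_adjoin _ _ ⟨n, h1, h2, h3.map_of_injective σ.injective⟩
  | algebraMap x => rw [σ.commutes]; exact IntermediateField.algebraMap_mem _ x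
  | add x y _ _ hx hy => rw [map_add]; exact add_mem hx hy
  | inv x _ hx => rw [map_inv₀]; exact inv_mem hx
  | mul x y _ _ hx hy => rw [map_mul]; exact mul_mem hx hy

lemma aux_comm {K : Type*} [Field K]
    (σ τ : AlgebraicClosure K ≃ₐ[K] AlgebraicClosure K) (x : AlgebraicClosure K)
    (hx : x ∈ cyclo2P K) : σ (τ x) = τ (σ x) := by
  unfold cyclo2P at hx
  induction hx using IntermediateField.adjoin_induction with
  | mem x hx =>
    obtain ⟨n, h1, h2, h3⟩ := hx
    have : NeZero n := ⟨by
      rcases h1 with h | h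
      · omega
      · exact h.1.ne_zero⟩
    obtain ⟨k, hk⟩ := aux_pow n x h3 σ
    obtain ⟨m, hm⟩ := aux_pow n x h3 τ
    rw [hk x h3.pow_eq_one, hm x h3.pow_eq_one, map_pow, map_pow, hk x h3.pow_eq_one,
      hm x h3.pow_eq_one, ← pow_mul, ← pow_mul, mul_comm]
  | algebraMap x => simp
  | add x y _ _ hx hy => simp [hx, hy]
  | inv x _ hx => simp [hx]
  | mul x y _ _ hx hy => simp [hx, hy]

lemma aux_num {ℓ : ℕ} (hℓ : ℓ.Prime) (k : ℕ) (h1 : k ≡ 1 [MOD ℓ])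
    (h4 : ℓ = 2 → k ≡ 1 [MOD 4]) :
    ∃ v, Nat.Coprime v ℓ ∧ ∑ r ∈ Finset.range ℓ, k ^ r = ℓ * v := by
  have key : (ℓ : ℤ) ^ 2 ∣ (∑ r ∈ Finset.range ℓ, (k : ℤ) ^ r) - ℓ := by
    rcases hℓ.eq_two_or_odd' with rfl | ho
    · have := h4 rfl
      rw [← Int.natCast_modEq_iff] at this
      simp [Finset.sum_range_succ]
      have := this.symm.dvd
      push_cast at this
      omega
    · have h2 : (ℓ : ℤ) ∣ k - 1 := by
        have := (Int.natCast_modEq_iff.2 h1).symm.dvd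
        simpa using this
      obtain ⟨b, hb⟩ := h2
      have := odd_sq_dvd_geom_sum₂_sub (R := ℤ) (a := 1) (b := b) ho
      have e : (1 : ℤ) + ℓ * b = k := by rw [← hb]; ring
      rw [e] at this
      simpa using this
  obtain ⟨c, hc⟩ := key
  have hz : (0 : ℤ) < ℓ := by exact_mod_cast hℓ.pos
  have hd : ℓ ∣ ∑ r ∈ Finset.range ℓ, k ^ r := by
    rw [← Int.natCast_dvd_natCast]
    push_cast
    exact ⟨ℓ * c + 1, by linear_combination hc⟩
  obtain ⟨v, hv⟩ := hd
  refine ⟨v, ?_, hv⟩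
  have hv' : (v : ℤ) = ℓ * c + 1 := by
    have h := congrArg (Nat.cast (R := ℤ)) hv
    push_cast at h
    have : (ℓ : ℤ) * v = ℓ * (ℓ * c + 1) := by linear_combination hc - h
    exact mul_left_cancel₀ hz.ne' this
  rw [Nat.coprime_comm, hℓ.coprime_iff_not_dvd]
  intro hdv
  have : (ℓ : ℤ) ∣ v := by exact_mod_cast hdv
  rw [hv'] at this
  have h1 : (ℓ : ℤ) ∣ 1 := (Int.dvd_add_right (dvd_mul_right _ _)).1 this
  have := Int.natCast_dvd_natCast.1 (by simpa using h1 : (ℓ : ℤ) ∣ ((1 : ℕ) : ℤ))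
  exact hℓ.one_lt.ne' (Nat.dvd_one.1 this)

lemma aux_claim1 {K : Type*} [Field K] (ℓ : ℕ) (hℓ : ℓ.Prime) (hK : (ℓ : K) ≠ 0)
    (t : ℕ∞)
    (htmax : ∀ n : ℕ, t < (n : ℕ∞) → ∀ x : AlgebraicClosure K,
      IsPrimitiveRoot x (ℓ ^ n) → x ∉ cyclo2P K)
    (w : ℕ) (hwin : ∃ z : K, IsPrimitiveRoot z (ℓ ^ w))
    (hwmax : ¬ ∃ z : K, IsPrimitiveRoot z (ℓ ^ (w + 1)))
    (n : ℕ) (hn : w < n) (x : AlgebraicClosure K) (hx0 : x ≠ 0) (hxF : x ∈ cyclo2P K)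
    (a : K) (ha : algebraMap K (AlgebraicClosure K) a = x ^ (ℓ ^ n)) :
    ∃ ξ : AlgebraicClosure K, ξ ≠ 0 ∧
      (∃ s : ℕ, (s : ℕ∞) ≤ t + w ∧ IsPrimitiveRoot ξ (ℓ ^ s)) ∧
      ∃ b : K, algebraMap K (AlgebraicClosure K) b = (x / ξ) ^ (ℓ ^ w) := by
  have : NeZero (ℓ ^ n) := ⟨pow_ne_zero _ hℓ.ne_zero⟩
  have hl0 : 0 < ℓ := hℓ.pos
  obtain ⟨Z, hZ⟩ := aux_prim hK n
  obtain ⟨d, rfl⟩ : ∃ d, n = w + 1 + d := ⟨n - (w + 1), by omega⟩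
  have hζ : IsPrimitiveRoot (Z ^ ℓ ^ d) (ℓ ^ (w + 1)) :=
    hZ.pow (pow_pos hl0 _) (by ring)
  have hζK : Z ^ ℓ ^ d ∉ (⊥ : IntermediateField K (AlgebraicClosure K)) := by
    intro h
    rw [IntermediateField.mem_bot] at h
    obtain ⟨z, hz⟩ := h
    apply hwmax
    refine ⟨z, IsPrimitiveRoot.of_map_of_injective (f := algebraMap K (AlgebraicClosure K)) ?_
      (algebraMap K (AlgebraicClosure K)).injective⟩
    rw [hz]; exact hζ
  obtain ⟨σ, hσ⟩ : ∃ σ : AlgebraicClosure K ≃ₐ[K] AlgebraicClosure K,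
      σ (Z ^ ℓ ^ d) ≠ Z ^ ℓ ^ d := by
    by_contra hcon
    push Not at hcon
    refine hζK (aux_fixed_mem _ _ (aux_sep hK (w + 1) _ (hζ.ne_zero (pow_pos hl0 _).ne') 1 ?_)
      fun σ _ => hcon σ)
    rw [hζ.pow_eq_one, map_one]
  obtain ⟨k, hk⟩ := aux_pow _ Z hZ σ
  -- the exponent
  have hk1 : (ℓ : ℤ) ^ w ∣ (k : ℤ) - 1 := by
    obtain ⟨z, hz⟩ := hwin
    have hz' : IsPrimitiveRoot (algebraMap K (AlgebraicClosure K) z) (ℓ ^ w) :=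
      hz.map_of_injective (algebraMap K (AlgebraicClosure K)).injective
    have h1 := hk (algebraMap K (AlgebraicClosure K) z) (by
      rw [show ℓ ^ (w + 1 + d) = ℓ ^ w * ℓ ^ (1 + d) by ring, pow_mul, hz'.pow_eq_one, one_pow])
    rw [σ.commutes] at h1
    have h0 := hz'.ne_zero (pow_pos hl0 _).ne'
    have h2 : (algebraMap K (AlgebraicClosure K) z) ^ ((k : ℤ) - 1) = 1 := by
      rw [zpow_sub₀ h0, zpow_natCast, ← h1, zpow_one, div_self h0]
    have := (hz'.zpow_eq_one_iff_dvd _).1 h2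
    simpa using this
  have hk2 : ¬ (ℓ : ℤ) ^ (w + 1) ∣ (k : ℤ) - 1 := by
    intro h
    apply hσ
    have h0 := hζ.ne_zero (pow_pos hl0 _).ne'
    rw [hk _ (by rw [← pow_mul, mul_comm, pow_mul, hZ.pow_eq_one, one_pow])]
    have h2 := (hζ.zpow_eq_one_iff_dvd ((k : ℤ) - 1)).2 (by simpa using h)
    rw [zpow_sub₀ h0, zpow_natCast, zpow_one, div_eq_one_iff_eq h0] at h2
    exact h2
  obtain ⟨u, hu⟩ := hk1
  have hcop : IsCoprime u ((ℓ : ℤ) ^ (w + 1 + d)) := by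
    apply IsCoprime.pow_right
    rw [isCoprime_comm]
    refine (Prime.coprime_iff_not_dvd (Nat.prime_iff_prime_int.1 hℓ)).2 ?_
    rintro ⟨c, rfl⟩
    exact hk2 ⟨c, by rw [hu]; ring⟩
  obtain ⟨p, q, hpq⟩ := hcop
  set e := σ x / x with he
  have hroot : ∀ τ : AlgebraicClosure K ≃ₐ[K] AlgebraicClosure K,
      (τ x / x) ^ (ℓ ^ (w + 1 + d)) = 1 := by
    intro τ
    rw [div_pow, ← map_pow, ← ha, τ.commutes, div_self]
    rw [ha]; exact pow_ne_zero _ hx0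
  have hσx0 : ∀ τ : AlgebraicClosure K ≃ₐ[K] AlgebraicClosure K, τ x ≠ 0 := fun τ =>
    (map_ne_zero _).2 hx0
  have he0 : e ≠ 0 := div_ne_zero (hσx0 _) hx0
  -- the element of K
  have hy : x ^ ((k : ℤ) - 1) / e ∈ (⊥ : IntermediateField K (AlgebraicClosure K)) := by
    refine aux_fixed_mem _ _ (aux_sep hK (w + 1 + d) _ (div_ne_zero (zpow_ne_zero _ hx0) he0)
      (a ^ ((k : ℤ) - 1)) ?_) ?_
    · rw [map_zpow₀, ha, div_pow, hroot σ, div_one, ← zpow_natCast, ← zpow_natCast, ← zpow_mul,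
        ← zpow_mul, mul_comm]
    · intro τ _
      have h1 : σ (τ x / x) = (τ x / x) ^ k := hk _ (hroot τ)
      have h2 : σ (τ x) = τ (σ x) := aux_comm σ τ x hxF
      rw [map_div₀, h2] at h1
      have hA := hσx0 τ
      have hB := hσx0 σ
      have hC : τ (σ x) ≠ 0 := (map_ne_zero _).2 hB
      rw [he, map_div₀, map_div₀, map_zpow₀, zpow_sub₀ hA, zpow_sub₀ hx0]
      simp only [zpow_natCast, zpow_one]
      rw [div_pow] at h1
      field_simp at h1 ⊢
      linear_combination -h1
  rw [IntermediateField.mem_bot] at hy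
  obtain ⟨y, hy⟩ := hy
  obtain ⟨ξ, hξ⟩ := IsAlgClosed.exists_pow_nat_eq (e ^ p) (pow_pos hl0 w)
  have heF : e ∈ cyclo2P K := div_mem (aux_stable σ x hxF) hxF
  obtain ⟨s, -, hs⟩ := aux_order hℓ (hroot σ)
  have hst : (s : ℕ∞) ≤ t := by
    by_contra hcon
    exact htmax s (not_le.1 hcon) _ hs heF
  have hξ0 : ξ ≠ 0 := by
    rintro rfl
    rw [zero_pow (pow_pos hl0 w).ne'] at hξ
    exact zpow_ne_zero _ he0 hξ.symm
  refine ⟨ξ, hξ0, ?_, y ^ p * a ^ ((ℓ : ℤ) ^ w * q), ?_⟩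
  · have h1 : ξ ^ ℓ ^ (w + s) = 1 := by
      rw [pow_add, pow_mul, hξ, ← zpow_natCast, ← zpow_mul, mul_comm, zpow_mul, zpow_natCast,
        hs.pow_eq_one, one_zpow]
    obtain ⟨r, hr, h2⟩ := aux_order hℓ h1
    refine ⟨r, ?_, h2⟩
    calc (r : ℕ∞) ≤ ((w + s : ℕ) : ℕ∞) := by exact_mod_cast hr
      _ = s + w := by push_cast; rw [add_comm]
      _ ≤ t + w := by gcongr
  · rw [map_mul, map_zpow₀, map_zpow₀, hy, ha, div_pow, hξ, div_zpow]
    have : x ^ ℓ ^ w = (x ^ ((k : ℤ) - 1)) ^ p * (x ^ ℓ ^ (w + 1 + d)) ^ ((ℓ : ℤ) ^ w * q) := by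
      rw [← zpow_natCast, ← zpow_natCast, ← zpow_mul, ← zpow_mul, ← zpow_add₀ hx0]
      congr 1
      rw [hu]
      push_cast
      linear_combination (-(ℓ : ℤ) ^ w) * hpq
    rw [this]
    ring

lemma aux_expr {K : Type*} [Field K] (Rad : Subgroup (AlgebraicClosure K)ˣ)
    (α : AlgebraicClosure K)
    (hα : α ∈ IntermediateField.adjoin K (Units.val '' (Rad : Set (AlgebraicClosure K)ˣ))) :
    ∃ (s : Finset (AlgebraicClosure K)ˣ), (∀ x ∈ s, x ∈ Rad) ∧
      ∃ c : (AlgebraicClosure K)ˣ → K,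
        α = ∑ x ∈ s, algebraMap K (AlgebraicClosure K) (c x) * (x : AlgebraicClosure K) := by
  rw [← IntermediateField.mem_toSubalgebra, IntermediateField.adjoin_toSubalgebra_of_isAlgebraic
    (fun x _ => Algebra.IsAlgebraic.isAlgebraic x), ← Subalgebra.mem_toSubmodule,
    Algebra.adjoin_eq_span] at hα
  have h1 : (Submonoid.closure (Units.val '' (Rad : Set (AlgebraicClosure K)ˣ)) :
      Set (AlgebraicClosure K)) = Units.val '' (Rad : Set (AlgebraicClosure K)ˣ) := by
    have := Submonoid.closure_eq (Rad.toSubmonoid.map (Units.coeHom (AlgebraicClosure K)))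
    exact congrArg _ this
  rw [h1, Finsupp.mem_span_image_iff_linearCombination] at hα
  obtain ⟨l, hl, rfl⟩ := hα
  refine ⟨l.support, fun x hx => hl hx, l, ?_⟩
  rw [Finsupp.linearCombination_apply, Finsupp.sum]
  simp [Algebra.smul_def]

/-- minimal expressions are fixed termwise -/
lemma aux_fix {K : Type*} [Field K] (ℓ : ℕ) (hℓ : ℓ.Prime) (hK : (ℓ : K) ≠ 0)
    (hodd : Odd ℓ ∨ ∃ z : K, IsPrimitiveRoot z 4)
    (M : IntermediateField K (AlgebraicClosure K))
    (hM : ∀ x : AlgebraicClosure K, IsPrimitiveRoot x ℓ → x ∈ M)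
    (α : AlgebraicClosure K)
    (s : Finset (AlgebraicClosure K)ˣ) (c : (AlgebraicClosure K)ˣ → AlgebraicClosure K)
    (hc : ∀ x, c x ∈ M) (hα : α = ∑ x ∈ s, c x * (x : AlgebraicClosure K))
    (hmin : ∀ s' ⊆ s, ∀ c' : (AlgebraicClosure K)ˣ → AlgebraicClosure K,
      (∀ x, c' x ∈ M) → α = ∑ x ∈ s', c' x * (x : AlgebraicClosure K) → s' = s)
    (J : ℕ) (σ : AlgebraicClosure K ≃ₐ[K] AlgebraicClosure K)
    (hσM : ∀ e ∈ M, σ e = e) (hσα : σ α = α)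
    (hJ : ∀ x ∈ s, (σ x / (x : AlgebraicClosure K)) ^ (ℓ ^ J) = 1) :
    ∀ x ∈ s, σ (x : AlgebraicClosure K) = x := by
  have hprimM : ∀ z : AlgebraicClosure K, z ^ ℓ = 1 → z ∈ M := by
    intro z hz
    obtain ⟨r, hr, h⟩ := aux_order hℓ (n := 1) (by simpa using hz)
    interval_cases r
    · have : z = 1 := by simpa using h
      rw [this]; exact one_mem _
    · exact hM z (by simpa using h)
  have key : ∀ σ : AlgebraicClosure K ≃ₐ[K] AlgebraicClosure K, (∀ e ∈ M, σ e = e) → σ α = α →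
      (∀ x ∈ s, (σ x / (x : AlgebraicClosure K)) ^ ℓ = 1) →
      ∀ x ∈ s, σ (x : AlgebraicClosure K) = x := by
    intro σ hσM hσα h x0 hx0
    by_contra hne
    classical
    have hcne : c x0 ≠ 0 := by
      intro h0
      have := hmin (s.erase x0) (Finset.erase_subset _ _) c hc (by
        rw [hα, ← Finset.add_sum_erase _ _ hx0, h0, zero_mul, zero_add])
      rw [← this] at hx0
      exact Finset.notMem_erase _ _ hx0
    let b : (AlgebraicClosure K)ˣ → AlgebraicClosure K := fun x =>
      if x ∈ s then c x * (σ x / (x : AlgebraicClosure K) - 1) else 0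
    have hbM : ∀ x, b x ∈ M := by
      intro x
      by_cases hx : x ∈ s
      · simp only [b, hx, if_true]
        exact mul_mem (hc x) (sub_mem (hprimM _ (h x hx)) (one_mem _))
      · simp only [b, hx, if_false]
        exact zero_mem _
    have hbsum : ∑ x ∈ s, b x * (x : AlgebraicClosure K) = 0 := by
      have h1 : σ α - α = 0 := by rw [hσα, sub_self]
      rw [← h1]
      rw [hα, map_sum, ← Finset.sum_sub_distrib]
      refine Finset.sum_congr rfl fun x hx => ?_
      simp only [b, hx, if_true]
      rw [map_mul, hσM _ (hc x)]
      have := x.ne_zero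
      field_simp
    have hb0 : b x0 ≠ 0 := by
      simp only [b, hx0, if_true]
      refine mul_ne_zero hcne ?_
      intro h2
      apply hne
      rw [sub_eq_zero, div_eq_one_iff_eq x0.ne_zero] at h2
      exact h2
    have := hmin (s.erase x0) (Finset.erase_subset _ _) (fun x => c x - c x0 / b x0 * b x)
      (fun x => sub_mem (hc x) (mul_mem (div_mem (hc x0) (hbM x0)) (hbM x))) (by
        have h2 : α = ∑ x ∈ s, (c x - c x0 / b x0 * b x) * (x : AlgebraicClosure K) := by
          simp only [sub_mul, Finset.sum_sub_distrib, mul_assoc]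
          rw [← Finset.mul_sum, hbsum, ← hα]
          simp
        rw [← Finset.add_sum_erase _ _ hx0, div_mul_cancel₀ _ hb0, sub_self, zero_mul,
          zero_add] at h2
        exact h2)
    rw [← this] at hx0
    exact Finset.notMem_erase _ _ hx0
  induction J generalizing σ with
  | zero =>
    intro x hx
    have := hJ x hx
    rwa [pow_zero, pow_one, div_eq_one_iff_eq x.ne_zero] at this
  | succ J ih =>
    apply key σ hσM hσα
    have : NeZero (ℓ ^ (J + 2)) := ⟨pow_ne_zero _ hℓ.ne_zero⟩
    have hl0 := hℓ.pos
    obtain ⟨Z, hZ⟩ := aux_prim hK (J + 2)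
    obtain ⟨k, hk⟩ := aux_pow _ Z hZ σ
    have hmod : ∀ (z : AlgebraicClosure K) (m : ℕ), IsPrimitiveRoot z m → m ∣ ℓ ^ (J + 2) →
        0 < m → σ z = z → k ≡ 1 [MOD m] := by
      intro z m hz hm hm0 hfix
      have h1 := hk z (by obtain ⟨q, hq⟩ := hm; rw [hq, pow_mul, hz.pow_eq_one, one_pow])
      rw [hfix] at h1
      have h0 := hz.ne_zero hm0.ne'
      have h2 : z ^ ((k : ℤ) - 1) = 1 := by
        rw [zpow_sub₀ h0, zpow_natCast, ← h1, zpow_one, div_self h0]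
      exact (Nat.modEq_iff_dvd.2 (by simpa using (hz.zpow_eq_one_iff_dvd _).1 h2)).symm
    have hkl : k ≡ 1 [MOD ℓ] := by
      have hg : IsPrimitiveRoot (Z ^ ℓ ^ (J + 1)) ℓ := hZ.pow (pow_pos hl0 _) (by ring)
      exact hmod _ _ hg (dvd_pow_self _ (by omega)) hl0 (hσM _ (hM _ hg))
    have hk4 : ℓ = 2 → k ≡ 1 [MOD 4] := by
      rintro rfl
      rcases hodd with h | ⟨z, hz⟩
      · exact absurd h (by decide)
      · exact hmod _ 4 (hz.map_of_injective (algebraMap K (AlgebraicClosure K)).injective)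
          ⟨2 ^ J, by ring⟩ (by norm_num) (σ.commutes z)
    obtain ⟨v, hv, hsum⟩ := aux_num hℓ k hkl hk4
    have hpow : ∀ x ∈ s, ∀ m : ℕ, (σ ^ m) (x : AlgebraicClosure K) =
        x * (σ x / (x : AlgebraicClosure K)) ^ (∑ r ∈ Finset.range m, k ^ r) := by
      intro x hx m
      have h1 := hk (σ x / (x : AlgebraicClosure K)) (by
        rw [show ℓ ^ (J + 2) = ℓ ^ (J + 1) * ℓ by ring, pow_mul, hJ x hx, one_pow])
      induction m with
      | zero => simp
      | succ m ihm =>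
        rw [pow_succ', AlgEquiv.mul_apply, ihm, map_mul, map_pow, h1, ← pow_mul,
          Finset.sum_range_succ', ← Finset.sum_congr rfl (fun r _ => (pow_succ' k r).symm),
          ← Finset.mul_sum, pow_zero, pow_succ, mul_comm]
        have := x.ne_zero
        field_simp
    have hfixpow : ∀ (e : AlgebraicClosure K) (m : ℕ), σ e = e → (σ ^ m) e = e := by
      intro e m he
      induction m with
      | zero => simp
      | succ m ihm => rw [pow_succ, AlgEquiv.mul_apply, he, ihm]
    have hfix := ih (σ ^ ℓ) (fun e he => hfixpow e ℓ (hσM e he)) (hfixpow α ℓ hσα) (by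
      intro x hx
      rw [hpow x hx, mul_div_cancel_left₀ _ x.ne_zero, hsum, ← pow_mul,
        show ℓ * v * ℓ ^ J = ℓ ^ (J + 1) * v by ring, pow_mul, hJ x hx, one_pow])
    intro x hx
    have h1 := hfix x hx
    rw [hpow x hx, hsum] at h1
    have h2 : (σ x / (x : AlgebraicClosure K)) ^ (ℓ * v) = 1 := by
      have := mul_left_cancel₀ x.ne_zero (h1.trans (mul_one _).symm)
      exact this
    rw [pow_mul] at h2
    have h3 : ((σ x / (x : AlgebraicClosure K)) ^ ℓ) ^ (ℓ ^ J) = 1 := by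
      rw [← pow_mul, ← pow_succ']; exact hJ x hx
    have h4 := Nat.Coprime.pow_right J hv
    have := Nat.eq_one_of_dvd_coprimes h4 (orderOf_dvd_of_pow_eq_one h2)
      (orderOf_dvd_of_pow_eq_one h3)
    exact orderOf_eq_one_iff.1 this

/-- Equations (5.6) and (5.7) in the proof of Theorem 1.1: with `ℓ` odd or `ζ₄ ∈ K`,
`ℓ ≠ char K`, `t` the largest element of `ℕ ∪ {∞}` with `ζ_{ℓ^t} ∈ K(ζ_{2𝒫})`, and `w ≥ 0`
the largest integer with `ζ_{ℓ^w} ∈ K` (so `w = 0` if `ζ_ℓ ∉ K`), assumed finite: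
`K(ζ_{2𝒫}) ∩ √[ℓ^∞]{K^×} ⊆ ⟨ζ_{ℓ^{t+w}}, √[ℓ^w]{K^×}⟩` and
`K(ζ_{2𝒫}) ∩ K(√[ℓ^∞]{K^×}) = K(K(ζ_{2𝒫}) ∩ √[ℓ^∞]{K^×})`. -/
theorem stmt18 (K : Type*) [Field K] (ℓ : ℕ) (hℓ : ℓ.Prime) (hchar : ringChar K ≠ ℓ)
    (hodd : Odd ℓ ∨ ∃ z : K, IsPrimitiveRoot z 4)
    (t : ℕ∞) (ht1 : 1 ≤ t)
    (htin : ∀ n : ℕ, (n : ℕ∞) ≤ t → ∀ x : AlgebraicClosure K,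
      IsPrimitiveRoot x (ℓ ^ n) → x ∈ cyclo2P K)
    (htmax : ∀ n : ℕ, t < (n : ℕ∞) → ∀ x : AlgebraicClosure K,
      IsPrimitiveRoot x (ℓ ^ n) → x ∉ cyclo2P K)
    (w : ℕ) (hwin : ∃ z : K, IsPrimitiveRoot z (ℓ ^ w))
    (hwmax : ¬ ∃ z : K, IsPrimitiveRoot z (ℓ ^ (w + 1))) :
    unitsIn (cyclo2P K) ⊓ radInf K ℓ ≤
      Subgroup.closure (pPowRootsUnits K ℓ (t + (w : ℕ∞))) ⊔ radGroup K (ℓ ^ w) ∧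
    cyclo2P K ⊓
        IntermediateField.adjoin K (Units.val '' (radInf K ℓ : Set (AlgebraicClosure K)ˣ)) =
      IntermediateField.adjoin K
        (Units.val '' ((unitsIn (cyclo2P K) ⊓ radInf K ℓ) : Set (AlgebraicClosure K)ˣ)) := by
  have hK : (ℓ : K) ≠ 0 := aux_ne hℓ hchar
  constructor
  · rintro x ⟨hxF, n, a, ha⟩
    change (x : AlgebraicClosure K) ∈ cyclo2P K at hxF
    rcases le_or_gt n w with hn | hn
    · apply Subgroup.mem_sup_right
      obtain ⟨d, rfl⟩ := Nat.exists_eq_add_of_le hn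
      rw [pow_add]
      exact radGroup_le K ⟨a, ha⟩
    · obtain ⟨ξ, hξ0, ⟨r, hr, hξ⟩, b, hb⟩ :=
        aux_claim1 ℓ hℓ hK t htmax w hwin hwmax n hn x x.ne_zero hxF a ha
      have hx : x = Units.mk0 ξ hξ0 * (x / Units.mk0 ξ hξ0) := by
        rw [mul_div_cancel]
      rw [hx]
      refine Subgroup.mul_mem_sup (Subgroup.subset_closure ⟨r, hr, hξ⟩) ⟨b, ?_⟩
      rw [hb, Units.val_div_eq_div_val, Units.val_mk0]
  · set M := IntermediateField.adjoin K
        (Units.val '' ((unitsIn (cyclo2P K) ⊓ radInf K ℓ) : Set (AlgebraicClosure K)ˣ)) with hMdef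
    have hMF : M ≤ cyclo2P K := by
      rw [hMdef, IntermediateField.adjoin_le_iff]
      rintro _ ⟨x, hx, rfl⟩
      exact hx.1
    apply le_antisymm
    · rintro α ⟨hαF, hαR⟩
      have hM : ∀ x : AlgebraicClosure K, IsPrimitiveRoot x ℓ → x ∈ M := by
        intro x hx
        have h0 := hx.ne_zero hℓ.ne_zero
        refine IntermediateField.subset_adjoin _ _ ⟨Units.mk0 x h0, ⟨?_, 1, 1, ?_⟩, rfl⟩
        · exact htin 1 (by simpa using ht1) x (by simpa using hx)
        · simp [hx.pow_eq_one]
      let P : Set (Finset (AlgebraicClosure K)ˣ) := {s | (∀ x ∈ s, x ∈ radInf K ℓ) ∧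
        ∃ c : (AlgebraicClosure K)ˣ → AlgebraicClosure K, (∀ x, c x ∈ M) ∧
          α = ∑ x ∈ s, c x * (x : AlgebraicClosure K)}
      have hP : P.Nonempty := by
        obtain ⟨s, hs, c, hc⟩ := aux_expr (radInf K ℓ) α hαR
        exact ⟨s, hs, fun x => algebraMap K _ (c x),
          fun x => IntermediateField.algebraMap_mem _ _, hc⟩
      obtain ⟨s, ⟨hs, c, hc, hα⟩, hmin⟩ := wellFounded_lt.has_min P hP
      have hsF : ∀ x ∈ s, (x : AlgebraicClosure K) ∈ cyclo2P K := by
        intro x hx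
        obtain ⟨n, a, ha⟩ := hs x hx
        refine aux_fixed_mem _ _ (aux_sep hK n _ x.ne_zero a ha) fun σ hσ => ?_
        have hex : ∀ y : (AlgebraicClosure K)ˣ, ∃ m : ℕ, y ∈ s →
            (σ y / (y : AlgebraicClosure K)) ^ (ℓ ^ m) = 1 := by
          intro y
          by_cases hy : y ∈ s
          · obtain ⟨m, b, hb⟩ := hs y hy
            refine ⟨m, fun _ => ?_⟩
            rw [div_pow, ← map_pow, ← hb, σ.commutes, div_self]
            rw [hb]; exact pow_ne_zero _ y.ne_zero
          · exact ⟨0, fun h => absurd h hy⟩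
        choose m hm using hex
        refine aux_fix ℓ hℓ hK hodd M hM α s c hc hα ?_ (s.sup m) σ (fun e he => hσ e (hMF he))
          (hσ α hαF) ?_ x hx
        · intro s' hs' c' hc' hα'
          by_contra hne
          exact hmin s' ⟨fun y hy => hs y (hs' hy), c', hc', hα'⟩
            (lt_of_le_of_ne hs' hne)
        · intro y hy
          obtain ⟨d, hd⟩ := Nat.exists_eq_add_of_le (Finset.le_sup (f := m) hy)
          rw [hd, pow_add, pow_mul, hm y hy, one_pow]
      rw [hα]
      refine sum_mem fun x hx => mul_mem (hc x) (IntermediateField.subset_adjoin _ _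
        ⟨x, ⟨hsF x hx, hs x hx⟩, rfl⟩)
    · refine le_inf hMF (IntermediateField.adjoin.mono _ _ _ (Set.image_mono ?_))
      exact fun x hx => hx.2

end
end

section
/- Let char(K) ≠ 2 and ζ_4 ∉ K, and let s be the largest element of ℤ ∪ {∞} such that ζ_{2^s} ∈ K(ζ_{2𝒫}). Then K(ζ_{2𝒫}) ∩ √[2^∞]{K^×} ⊆ ⟨ζ_{2^{s+1}}, √{K^×}⟩ and K(ζ_{2𝒫}) ∩ K(√[2^∞]{K^×}) ⊆ K(ζ_{2^{s+1}}, √{K^×}). -/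
noncomputable section

open IntermediateField

lemma aux_mem_of_fixed (K : Type*) [Field K] (F : IntermediateField K (AlgebraicClosure K))
    (y : AlgebraicClosure K) (hsep : IsSeparable K y)
    (h : ∀ g : AlgebraicClosure K ≃ₐ[K] AlgebraicClosure K, (∀ x ∈ F, g x = x) → g y = y) :
    y ∈ F := by
  have hF : IsSeparable F y := hsep.tower_top F
  have hint : IsIntegral F y := (Algebra.IsIntegral.isIntegral (R := K) y).tower_top
  have hroot : ∀ z ∈ (minpoly F y).rootSet (AlgebraicClosure K), z = y := by
    intro z hz
    have hz' : Polynomial.aeval z (minpoly F y) = 0 := (Polynomial.mem_rootSet.1 hz).2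
    obtain ⟨σ, hσ⟩ := minpoly.exists_algEquiv_of_root' (K := F) (L := AlgebraicClosure K)
      (x := z) (y := y) hint.isAlgebraic hz'
    have := h (σ.restrictScalars K) (fun x hx => σ.commutes ⟨x, hx⟩)
    rw [← hσ]; exact this
  have hcard := Polynomial.card_rootSet_eq_natDegree (F := F) (K := AlgebraicClosure K)
    (p := minpoly F y) hF (IsAlgClosed.splits _)
  have hsub : Subsingleton ((minpoly F y).rootSet (AlgebraicClosure K)) :=
    ⟨fun a b => Subtype.ext ((hroot a a.2).trans (hroot b b.2).symm)⟩
  have hle : (minpoly F y).natDegree ≤ 1 := by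
    rw [← hcard]; exact Fintype.card_le_one_iff_subsingleton.2 hsub
  have hpos := minpoly.natDegree_pos hint
  have h1 : (minpoly F y).natDegree = 1 := by omega
  rw [minpoly.natDegree_eq_one_iff] at h1
  obtain ⟨w, hw⟩ := h1
  rw [← hw]; exact w.2

lemma aux_sep_root (K : Type*) [Field K] (n : ℕ) (hn : (n : K) ≠ 0) (x : AlgebraicClosure K)
    (hx : x ≠ 0) (a : K) (ha : algebraMap K (AlgebraicClosure K) a = x ^ n) :
    IsSeparable K x := by
  have ha0 : a ≠ 0 := by
    rintro rfl
    rw [map_zero] at ha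
    exact pow_ne_zero n hx ha.symm
  refine (Polynomial.separable_X_pow_sub_C a hn ha0).of_dvd (minpoly.dvd _ _ ?_)
  simp [ha]

lemma aux_two (K : Type*) [Field K] (hchar : ringChar K ≠ 2) (n : ℕ) :
    ((2 ^ n : ℕ) : K) ≠ 0 := by
  push_cast
  exact pow_ne_zero _ (Ring.two_ne_zero hchar)

lemma aux_sep_rad (K : Type*) [Field K] (hchar : ringChar K ≠ 2) (x : (AlgebraicClosure K)ˣ)
    (hx : x ∈ radInf K 2) : IsSeparable K (x : AlgebraicClosure K) := by
  obtain ⟨n, a, ha⟩ := hx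
  exact aux_sep_root K _ (aux_two K hchar n) _ x.ne_zero a ha

lemma aux_sep_cyclo (K : Type*) [Field K] (y : AlgebraicClosure K) (hy : y ∈ cyclo2P K) :
    IsSeparable K y := by
  have : cyclo2P K ≤ separableClosure K (AlgebraicClosure K) := by
    unfold cyclo2P
    rw [IntermediateField.adjoin_le_iff]
    rintro x ⟨n, hn, hc, hx⟩
    have hn0 : (n : K) ≠ 0 := fun h => hc ((ringChar.spec K n).1 h)
    have hn1 : n ≠ 0 := by rintro rfl; simp at hn0
    exact mem_separableClosure_iff.2 (aux_sep_root K n hn0 x (hx.ne_zero hn1) 1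
      (by rw [hx.pow_eq_one, map_one]))
  exact mem_separableClosure_iff.1 (this hy)

lemma aux_comm_cyclo (K : Type*) [Field K] (y : AlgebraicClosure K) (hy : y ∈ cyclo2P K)
    (g h : AlgebraicClosure K ≃ₐ[K] AlgebraicClosure K) : g (h y) = h (g y) := by
  unfold cyclo2P at hy
  induction hy using IntermediateField.adjoin_induction with
  | mem x hx =>
    obtain ⟨n, hn, hc, hx⟩ := hx
    have hn1 : n ≠ 0 := by rintro rfl; simp at hc
    have : NeZero n := ⟨hn1⟩
    obtain ⟨a, -, ha⟩ := hx.eq_pow_of_pow_eq_one (ξ := g x) (by rw [← map_pow, hx.pow_eq_one, map_one])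
    obtain ⟨b, -, hb⟩ := hx.eq_pow_of_pow_eq_one (ξ := h x) (by rw [← map_pow, hx.pow_eq_one, map_one])
    rw [← ha, ← hb, map_pow, map_pow, ← ha, ← hb, ← pow_mul, ← pow_mul, mul_comm]
  | algebraMap x => simp
  | add x y _ _ hx hy => simp [hx, hy]
  | inv x _ hx => simp [hx]
  | mul x y _ _ hx hy => simp [hx, hy]

/-- The 2-power roots of unity. -/
def auxMu (K : Type*) [Field K] : Subgroup (AlgebraicClosure K)ˣ where
  carrier := {x | ∃ n : ℕ, x ^ (2 ^ n) = 1}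
  one_mem' := ⟨0, by simp⟩
  mul_mem' := by
    rintro a b ⟨n, ha⟩ ⟨m, hb⟩
    refine ⟨n + m, ?_⟩
    rw [mul_pow, pow_add, pow_mul, ha, mul_comm, mul_comm (2 ^ n), pow_mul, hb]; simp
  inv_mem' := by
    rintro a ⟨n, ha⟩
    exact ⟨n, by rw [inv_pow, ha, inv_one]⟩

lemma auxMu_le (K : Type*) [Field K] : auxMu K ≤ radInf K 2 := by
  rintro x ⟨n, hx⟩
  refine ⟨n, 1, ?_⟩
  rw [← Units.val_pow_eq_pow_val, hx]; simp

lemma auxMu_map (K : Type*) [Field K] (x : (AlgebraicClosure K)ˣ) (hx : x ∈ radInf K 2)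
    (g : AlgebraicClosure K ≃ₐ[K] AlgebraicClosure K) :
    ∃ z ∈ auxMu K, g x = z * (x : AlgebraicClosure K) := by
  obtain ⟨n, a, ha⟩ := hx
  refine ⟨Units.map (g : AlgebraicClosure K →* AlgebraicClosure K) x * x⁻¹, ⟨n, ?_⟩, by simp⟩
  ext
  have : g (x : AlgebraicClosure K) ^ 2 ^ n = (x : AlgebraicClosure K) ^ 2 ^ n := by
    rw [← map_pow, ← ha]; simp
  have h0 : (x : AlgebraicClosure K) ^ 2 ^ n ≠ 0 := pow_ne_zero _ x.ne_zero
  simp [mul_pow, this, h0]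

lemma aux_gcd {G : Type*} [CommGroup G] (H : Subgroup G) (x : G) (a b : ℕ)
    (ha : x ^ a ∈ H) (hb : x ^ b ∈ H) : x ^ (Nat.gcd a b) ∈ H := by
  rw [← zpow_natCast, Nat.gcd_eq_gcd_ab, zpow_add, zpow_mul, zpow_mul, zpow_natCast, zpow_natCast]
  exact mul_mem (zpow_mem ha _) (zpow_mem hb _)

/-- Key lemma. -/
lemma aux_key (K : Type*) [Field K] (hchar : ringChar K ≠ 2)
    (h4 : ¬ ∃ z : K, IsPrimitiveRoot z 4) (x : (AlgebraicClosure K)ˣ) (hx : x ∈ radInf K 2)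
    (hcomm : ∀ g h : AlgebraicClosure K ≃ₐ[K] AlgebraicClosure K,
      g (h (x : AlgebraicClosure K)) = h (g x)) :
    ∃ ξ ∈ auxMu K, ∃ w ∈ radGroup K 2, x = ξ * w := by
  have hxR := hx
  obtain ⟨n0, hn0⟩ := hx
  obtain ⟨n, hn2, a, ha⟩ : ∃ n, 2 ≤ n ∧ x ∈ radGroup K (2 ^ n) :=
    ⟨n0 + 2, by omega, by rw [pow_add]; exact radGroup_le K hn0⟩
  have hne : NeZero ((2 ^ n : ℕ) : AlgebraicClosure K) := ⟨by
    have := (map_ne_zero (algebraMap K (AlgebraicClosure K))).2 (aux_two K hchar n)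
    rwa [map_natCast] at this⟩
  obtain ⟨ω, hω⟩ := HasEnoughRootsOfUnity.exists_primitiveRoot (AlgebraicClosure K) (2 ^ n)
  have hi : IsPrimitiveRoot (ω ^ (2 ^ (n - 2))) 4 :=
    hω.pow (by positivity) (by
      rw [show (4 : ℕ) = 2 ^ 2 by norm_num, ← pow_add]; congr 1; omega)
  set i := ω ^ (2 ^ (n - 2)) with hidef
  have hi0 : i ≠ 0 := hi.ne_zero (by norm_num)
  obtain ⟨τ, hτ⟩ : ∃ τ : AlgebraicClosure K ≃ₐ[K] AlgebraicClosure K, τ i ≠ i := by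
    by_contra hcon
    push Not at hcon
    have hbot : i ∈ (⊥ : IntermediateField K (AlgebraicClosure K)) :=
      aux_mem_of_fixed K ⊥ i (aux_sep_root K 4 (by
        have := aux_two K hchar 2; norm_num at this ⊢; exact this) i hi0 1 (by
          rw [hi.pow_eq_one, map_one])) (fun g _ => hcon g)
    obtain ⟨z, hz⟩ := IntermediateField.mem_bot.1 hbot
    exact h4 ⟨z, IsPrimitiveRoot.of_map_of_injective (f := algebraMap K (AlgebraicClosure K))
      (by rw [hz]; exact hi) (algebraMap K (AlgebraicClosure K)).injective⟩
  obtain ⟨t, -, ht⟩ := hω.eq_pow_of_pow_eq_one (ξ := τ ω) (by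
    rw [← map_pow, hω.pow_eq_one, map_one])
  have hτpow : ∀ η : AlgebraicClosure K, η ^ (2 ^ n) = 1 → τ η = η ^ t := by
    intro η hη
    obtain ⟨j, -, hj⟩ := hω.eq_pow_of_pow_eq_one hη
    rw [← hj, map_pow, ← ht, ← pow_mul, ← pow_mul, mul_comm]
  have hit : τ i = i ^ t := by rw [hidef, map_pow, ← ht, ← pow_mul, ← pow_mul, mul_comm]
  have hi4 := hi.pow_eq_one
  have ht4 : t % 4 = 3 := by
    have hmod : i ^ t = i ^ (t % 4) := by
      conv_lhs => rw [← Nat.div_add_mod t 4, pow_add, pow_mul, hi4, one_pow, one_mul]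
    have hprim : IsPrimitiveRoot (i ^ t) 4 := by
      rw [← hit]; exact hi.map_of_injective τ.injective
    have hcop := (hi.pow_iff_coprime (by norm_num) t).1 hprim
    have hodd : t % 2 = 1 := by
      have := hcop.coprime_dvd_right (show 2 ∣ 4 by norm_num)
      rwa [Nat.coprime_two_right, Nat.odd_iff] at this
    have h1 : t % 4 ≠ 1 := by
      intro h1
      rw [h1, pow_one] at hmod
      exact hτ (hit.trans hmod)
    omega
  obtain ⟨q, hq⟩ : ∃ q, t = 2 * (2 * q + 1) + 1 := ⟨t / 4, by omega⟩
  obtain ⟨z, hz, hzx⟩ := auxMu_map K x hxR τ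
  have hzK : x ^ (2 * (2 * q + 1)) * z⁻¹ ∈ baseUnits K := by
    have hR : x ^ (2 * (2 * q + 1)) * z⁻¹ ∈ radInf K 2 :=
      mul_mem (pow_mem hxR _) (inv_mem (auxMu_le K hz))
    have hbot : ((x ^ (2 * (2 * q + 1)) * z⁻¹ : (AlgebraicClosure K)ˣ) : AlgebraicClosure K) ∈
        (⊥ : IntermediateField K (AlgebraicClosure K)) := by
      refine aux_mem_of_fixed K ⊥ _ (aux_sep_rad K hchar _ hR) (fun g _ => ?_)
      have hx0 := x.ne_zero
      have hz0 := z.ne_zero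
      obtain ⟨c, hc⟩ : ∃ c : AlgebraicClosure K, c = g x / x := ⟨_, rfl⟩
      have hgx : g x = c * x := by rw [hc]; field_simp
      have hcn : c ^ (2 ^ n) = 1 := by
        rw [hc, div_pow, ← map_pow, ← ha]; simp
        rintro rfl
        rw [map_zero] at ha
        exact pow_ne_zero _ hx0 ha.symm
      have hc0 : c ≠ 0 := by rintro rfl; rw [zero_pow (by positivity)] at hcn; simp at hcn
      have hgz0 : g z ≠ 0 := by simp [hz0]
      have h1 := hcomm g τ
      rw [hzx, hgx, map_mul, map_mul, hzx, hgx, hτpow c hcn, hq, pow_succ] at h1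
      have h2 : g z = c ^ (2 * (2 * q + 1)) * z := by
        have : c * (x : AlgebraicClosure K) ≠ 0 := mul_ne_zero hc0 hx0
        apply mul_right_cancel₀ this
        rw [h1]; ring
      rw [Units.val_mul, Units.val_pow_eq_pow_val, Units.val_inv_eq_inv_val, map_mul, map_pow,
        map_inv₀, hgx, h2, mul_pow]
      field_simp
    obtain ⟨w, hw⟩ := IntermediateField.mem_bot.1 hbot
    have hw0 : w ≠ 0 := by
      rintro rfl
      rw [map_zero] at hw
      exact Units.ne_zero _ hw.symm
    exact ⟨Units.mk0 w hw0, Units.ext hw⟩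
  have hx2 : x ^ 2 ∈ auxMu K ⊔ baseUnits K := by
    have hA : x ^ (2 * (2 * q + 1)) ∈ auxMu K ⊔ baseUnits K := by
      have : x ^ (2 * (2 * q + 1)) = z * (x ^ (2 * (2 * q + 1)) * z⁻¹) := by
        rw [mul_comm z]; simp
      rw [this]
      exact Subgroup.mul_mem_sup hz hzK
    have hB : x ^ (2 ^ n) ∈ auxMu K ⊔ baseUnits K := by
      apply (le_sup_right : baseUnits K ≤ _)
      have hw0 : a ≠ 0 := by
        rintro rfl
        rw [map_zero] at ha
        exact pow_ne_zero _ x.ne_zero ha.symm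
      exact ⟨Units.mk0 a hw0, Units.ext (by simpa using ha)⟩
    have := aux_gcd _ x _ _ hA hB
    have hg : Nat.gcd (2 * (2 * q + 1)) (2 ^ n) = 2 := by
      obtain ⟨m, rfl⟩ : ∃ m, n = m + 1 := ⟨n - 1, by omega⟩
      rw [pow_succ', Nat.gcd_mul_left]
      have : Nat.Coprime (2 * q + 1) (2 ^ m) :=
        Nat.Coprime.pow_right _ (Nat.coprime_two_right.2 ⟨q, rfl⟩)
      rw [this.gcd_eq_one]
    rwa [hg] at this
  obtain ⟨ζ, ⟨m, hζ⟩, c, ⟨b, hb⟩, hζc⟩ := Subgroup.mem_sup.1 hx2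
  obtain ⟨ξ, hξ⟩ := IsAlgClosed.exists_pow_nat_eq (ζ : AlgebraicClosure K) (show 0 < 2 by norm_num)
  have hξ0 : ξ ≠ 0 := by
    rintro rfl
    rw [zero_pow (by norm_num)] at hξ
    exact ζ.ne_zero hξ.symm
  have hξ' : (Units.mk0 ξ hξ0) ^ 2 = ζ := Units.ext (by simpa using hξ)
  refine ⟨Units.mk0 ξ hξ0, ⟨m + 1, by rw [pow_succ', pow_mul, hξ', hζ]⟩,
    (Units.mk0 ξ hξ0)⁻¹ * x, ⟨b, ?_⟩, by simp⟩
  have : ((Units.mk0 ξ hξ0)⁻¹ * x) ^ 2 = c := by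
    rw [mul_pow, inv_pow, hξ', ← hζc]; simp
  rw [← Units.val_pow_eq_pow_val, this, ← hb]
  rfl

lemma aux_adjoin_span (K : Type*) [Field K] (F : IntermediateField K (AlgebraicClosure K))
    (R : Subgroup (AlgebraicClosure K)ˣ) (y : AlgebraicClosure K)
    (hy : y ∈ IntermediateField.adjoin K (Units.val '' (R : Set (AlgebraicClosure K)ˣ))) :
    y ∈ Submodule.span F (Units.val '' (R : Set (AlgebraicClosure K)ˣ)) := by
  have h1 : y ∈ Algebra.adjoin K (Units.val '' (R : Set (AlgebraicClosure K)ˣ)) := by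
    rw [← IntermediateField.adjoin_toSubalgebra_of_isAlgebraic
      (fun x _ => Algebra.IsAlgebraic.isAlgebraic x)]
    exact hy
  have h2 : (Submonoid.closure (Units.val '' (R : Set (AlgebraicClosure K)ˣ)) :
      Set (AlgebraicClosure K)) = Units.val '' (R : Set (AlgebraicClosure K)ˣ) := by
    have : Units.val '' (R : Set (AlgebraicClosure K)ˣ) =
        ((R.toSubmonoid.map (Units.coeHom (AlgebraicClosure K)) :
          Submonoid (AlgebraicClosure K)) : Set (AlgebraicClosure K)) := by
      ext; simp
    rw [this, Submonoid.closure_eq]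
  have h3 : y ∈ Submodule.span K (Units.val '' (R : Set (AlgebraicClosure K)ˣ)) := by
    rw [← h2, ← Algebra.adjoin_eq_span]; exact h1
  exact Submodule.span_le_restrictScalars K F _ h3

lemma aux_B (K : Type*) [Field K] (hchar : ringChar K ≠ 2)
    (h4 : ¬ ∃ z : K, IsPrimitiveRoot z 4) (y : AlgebraicClosure K) (hyL : y ∈ cyclo2P K)
    (hy : y ∈ IntermediateField.adjoin K
      (Units.val '' (radInf K 2 : Set (AlgebraicClosure K)ˣ))) :
    y ∈ IntermediateField.adjoin K (Units.val '' (auxMu K : Set (AlgebraicClosure K)ˣ) ∪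
      Units.val '' (radGroup K 2 : Set (AlgebraicClosure K)ˣ)) := by
  set F := IntermediateField.adjoin K (Units.val '' (auxMu K : Set (AlgebraicClosure K)ˣ)) with hF
  set N := IntermediateField.adjoin K (Units.val '' (auxMu K : Set (AlgebraicClosure K)ˣ) ∪
      Units.val '' (radGroup K 2 : Set (AlgebraicClosure K)ˣ)) with hN
  have hFN : F ≤ N := IntermediateField.adjoin.mono _ _ _ Set.subset_union_left
  have hmuF : ∀ z ∈ auxMu K, (z : AlgebraicClosure K) ∈ F := fun z hz =>
    IntermediateField.subset_adjoin _ _ ⟨z, hz, rfl⟩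
  have hcF : ∀ z ∈ F, ∀ g h : AlgebraicClosure K ≃ₐ[K] AlgebraicClosure K,
      g (h z) = h (g z) := by
    intro z hz g h
    rw [hF] at hz
    induction hz using IntermediateField.adjoin_induction with
    | mem x hx =>
      obtain ⟨u, ⟨n, hu⟩, rfl⟩ := hx
      have hu' : (u : AlgebraicClosure K) ^ (2 ^ n) = 1 := by
        rw [← Units.val_pow_eq_pow_val, hu]; rfl
      have hprim := IsPrimitiveRoot.orderOf (u : AlgebraicClosure K)
      have hpos : orderOf (u : AlgebraicClosure K) ≠ 0 :=
        (orderOf_pos_iff.2 (isOfFinOrder_iff_pow_eq_one.2 ⟨2 ^ n, by positivity, hu'⟩)).ne'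
      have : NeZero (orderOf (u : AlgebraicClosure K)) := ⟨hpos⟩
      obtain ⟨a, -, ha⟩ := hprim.eq_pow_of_pow_eq_one (ξ := g u) (by
        rw [← map_pow, hprim.pow_eq_one, map_one])
      obtain ⟨b, -, hb⟩ := hprim.eq_pow_of_pow_eq_one (ξ := h u) (by
        rw [← map_pow, hprim.pow_eq_one, map_one])
      rw [← ha, ← hb, map_pow, map_pow, ← ha, ← hb, ← pow_mul, ← pow_mul, mul_comm]
    | algebraMap x => simp
    | add x y _ _ hx hy => simp [hx, hy]
    | inv x _ hx => simp [hx]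
    | mul x y _ _ hx hy => simp [hx, hy]
  obtain ⟨B, hBR, hspan, hli⟩ := exists_linearIndependent F
    (Units.val '' (radInf K 2 : Set (AlgebraicClosure K)ˣ))
  have hyB : y ∈ Submodule.span F B := by
    rw [hspan]; exact aux_adjoin_span K F _ y hy
  obtain ⟨c, hc⟩ := (Finsupp.mem_span_iff_linearCombination F B y).1 hyB
  rw [Finsupp.linearCombination_apply, Finsupp.sum] at hc
  -- commutators act trivially on the basis elements that occur
  have hfix : ∀ g : AlgebraicClosure K ≃ₐ[K] AlgebraicClosure K,
      (∀ z ∈ F, g z = z) → g y = y → ∀ b ∈ c.support, g (b : AlgebraicClosure K) = b := by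
    intro g hgF hgy b hb
    have hchi : ∀ b : B, ∃ χ : F, g (b : AlgebraicClosure K) = (χ : AlgebraicClosure K) * b := by
      rintro ⟨b, hb⟩
      obtain ⟨u, hu, rfl⟩ := hBR hb
      obtain ⟨z, hz, hzu⟩ := auxMu_map K u hu g
      exact ⟨⟨z, hmuF z hz⟩, hzu⟩
    choose χ hχ using hchi
    have hsum : ∑ b ∈ c.support, (c b * (χ b - 1)) • (b : AlgebraicClosure K) = 0 := by
      have h1 : g y = ∑ b ∈ c.support, (c b * χ b) • (b : AlgebraicClosure K) := by
        rw [← hc, map_sum]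
        refine Finset.sum_congr rfl fun b _ => ?_
        rw [IntermediateField.smul_def, IntermediateField.smul_def, smul_eq_mul, smul_eq_mul,
          map_mul, hgF _ (c b).2, hχ b]
        push_cast
        ring
      have h2 : ∑ b ∈ c.support, (c b * (χ b - 1)) • (b : AlgebraicClosure K) = g y - y := by
        rw [h1]
        rw [← hc]
        rw [← Finset.sum_sub_distrib]
        refine Finset.sum_congr rfl fun b _ => ?_
        rw [← sub_smul, mul_sub, mul_one]
      rw [h2, hgy, sub_self]
    have h0 := linearIndependent_iff'.1 hli c.support (fun b => c b * (χ b - 1)) hsum b hb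
    have hcb : c b ≠ 0 := Finsupp.mem_support_iff.1 hb
    have hχ1 : χ b = 1 := by
      rcases mul_eq_zero.1 h0 with h | h
      · exact absurd h hcb
      · exact sub_eq_zero.1 h
    rw [hχ b, hχ1]; simp
  rw [← hc]
  refine sum_mem fun b hb => ?_
  rw [IntermediateField.smul_def, smul_eq_mul]
  refine mul_mem (hFN (c b).2) ?_
  obtain ⟨u, hu, hub⟩ := hBR b.2
  obtain ⟨ξ, hξ, w, hw, hx⟩ := aux_key K hchar h4 u hu (by
    intro g h
    have hb1 := hfix ((h.trans g).trans (g.trans h).symm) ?_ ?_ b hb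
    · simp only [AlgEquiv.trans_apply] at hb1
      rw [AlgEquiv.symm_apply_eq] at hb1
      rw [hub]
      simpa using hb1
    · intro z hz
      rw [AlgEquiv.trans_apply, AlgEquiv.symm_apply_eq]
      exact hcF z hz g h
    · rw [AlgEquiv.trans_apply, AlgEquiv.symm_apply_eq]
      exact aux_comm_cyclo K y hyL g h)
  rw [← hub, hx, Units.val_mul]
  exact mul_mem (IntermediateField.subset_adjoin _ _ (Or.inl ⟨ξ, hξ, rfl⟩))
    (IntermediateField.subset_adjoin _ _ (Or.inr ⟨w, hw, rfl⟩))

lemma aux_neg_one_ne (K : Type*) [Field K] (hchar : ringChar K ≠ 2) :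
    (-1 : AlgebraicClosure K) ≠ 1 := by
  have h2 : (2 : AlgebraicClosure K) ≠ 0 := by
    have := (map_ne_zero (algebraMap K (AlgebraicClosure K))).2 (Ring.two_ne_zero hchar)
    rwa [map_ofNat] at this
  intro h
  apply h2
  linear_combination -h

lemma aux_prim_s19 (K : Type*) [Field K] (hchar : ringChar K ≠ 2) (x : AlgebraicClosure K) (n : ℕ)
    (hx : x ^ (2 ^ n) = -1) : IsPrimitiveRoot x (2 ^ (n + 1)) := by
  have : orderOf x = 2 ^ (n + 1) := by
    have : Fact (Nat.Prime 2) := ⟨Nat.prime_two⟩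
    apply orderOf_eq_prime_pow
    · rw [hx]; exact aux_neg_one_ne K hchar
    · rw [pow_succ, pow_mul, hx]; simp
  rw [← this]; exact IsPrimitiveRoot.orderOf x

lemma aux_mem_four (K : Type*) [Field K] (hchar : ringChar K ≠ 2) (x : AlgebraicClosure K)
    (hx : x ^ 2 = -1) : x ∈ cyclo2P K := by
  refine IntermediateField.subset_adjoin _ _ ⟨4, Or.inl rfl, ?_, ?_⟩
  · intro h
    have := (ringChar.spec K 4).2 h
    have h4 := aux_two K hchar 2
    norm_num at h4 this
    exact h4 this
  · have := aux_prim_s19 K hchar x 1 (by simpa using hx)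
    simpa using this

lemma aux_seq (K : Type*) [Field K] : ∃ w : ℕ → AlgebraicClosure K,
    w 0 = -1 ∧ ∀ k, w (k + 1) ^ 2 = w k := by
  have h : ∀ a : AlgebraicClosure K, ∃ b, b ^ 2 = a := fun a =>
    IsAlgClosed.exists_pow_nat_eq a (by norm_num)
  choose f hf using h
  exact ⟨fun n => Nat.rec (-1) (fun _ a => f a) n, rfl, fun k => hf _⟩

lemma aux_C (K : Type*) [Field K] (hchar : ringChar K ≠ 2) (S : ℕ)
    (hsin : ∀ n : ℕ, n ≤ S → ∀ x : AlgebraicClosure K,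
      IsPrimitiveRoot x (2 ^ n) → x ∈ cyclo2P K)
    (hsmax : ∀ n : ℕ, S < n → ∀ x : AlgebraicClosure K,
      IsPrimitiveRoot x (2 ^ n) → x ∉ cyclo2P K)
    (y : AlgebraicClosure K) (hyL : y ∈ cyclo2P K)
    (hy : y ∈ IntermediateField.adjoin K (Units.val '' (auxMu K : Set (AlgebraicClosure K)ˣ) ∪
      Units.val '' (radGroup K 2 : Set (AlgebraicClosure K)ˣ)))
    (T : IntermediateField K (AlgebraicClosure K))
    (hT1 : ∀ n ≤ S + 1, ∀ x : AlgebraicClosure K, IsPrimitiveRoot x (2 ^ n) → x ∈ T)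
    (hT2 : ∀ x ∈ radGroup K 2, (x : AlgebraicClosure K) ∈ T) : y ∈ T := by
  obtain ⟨w, hw0, hw⟩ := aux_seq K
  have hwd : ∀ d j, w (j + d) ^ (2 ^ d) = w j := by
    intro d
    induction d with
    | zero => simp
    | succ d ih => intro j; rw [pow_succ', pow_mul, ← add_assoc, hw, ih]
  have hwp : ∀ k, IsPrimitiveRoot (w k) (2 ^ (k + 1)) := fun k =>
    aux_prim_s19 K hchar _ k (by have := hwd k 0; rwa [zero_add, hw0] at this)
  have hwne : ∀ k, w k ≠ 0 := fun k => (hwp k).ne_zero (by positivity)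
  have hneg1 : (-1 : AlgebraicClosure K) ∈ cyclo2P K := neg_mem (one_mem _)
  have hwS2 : w S ^ 2 ∈ cyclo2P K := by
    cases S with
    | zero => rw [hw0]; simp [one_mem]
    | succ S => rw [hw]; exact hsin (S + 1) le_rfl _ (hwp S)
  -- the automorphism σ
  obtain ⟨σ, hσL, hσ⟩ : ∃ σ : AlgebraicClosure K ≃ₐ[K] AlgebraicClosure K,
      (∀ x ∈ cyclo2P K, σ x = x) ∧ σ (w S) = - w S := by
    by_contra hcon
    push Not at hcon
    refine hsmax (S + 1) (by omega) (w S) (hwp S) ?_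
    refine aux_mem_of_fixed K _ _ (aux_sep_root K (2 ^ (S + 1)) (aux_two K hchar _) _ (hwne S) 1
      (by rw [(hwp S).pow_eq_one, map_one])) (fun g hg => ?_)
    have h1 : g (w S) ^ 2 = w S ^ 2 := by rw [← map_pow]; exact hg _ hwS2
    rcases sq_eq_sq_iff_eq_or_eq_neg.1 h1 with h | h
    · exact h
    · exact absurd h (hcon g hg)
  have hσnL : ∀ n : ℕ, ∀ x ∈ cyclo2P K, (σ ^ n) x = x := by
    intro n x hx
    induction n with
    | zero => simp
    | succ n ih => rw [pow_succ, AlgEquiv.mul_apply, hσL x hx, ih]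
  have hφ : ∀ d, (σ ^ (2 ^ d)) (w (S + d)) = - w (S + d) := by
    intro d
    induction d with
    | zero => simpa using hσ
    | succ d ih =>
      set φ := σ ^ (2 ^ d) with hφdef
      have e1 : σ ^ (2 ^ (d + 1)) = φ * φ := by rw [pow_succ, pow_mul, sq]
      obtain ⟨ε, hε⟩ : ∃ ε, ε = φ (w (S + (d + 1))) / w (S + (d + 1)) := ⟨_, rfl⟩
      have h0 := hwne (S + (d + 1))
      have hε' : φ (w (S + (d + 1))) = ε * w (S + (d + 1)) := by rw [hε]; field_simp
      have hε2 : ε ^ 2 = -1 := by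
        rw [hε, div_pow, ← map_pow, ← add_assoc, hw, ih, neg_div, div_self (hwne _)]
      have hεL := hσnL (2 ^ d) ε (aux_mem_four K hchar ε hε2)
      rw [e1, AlgEquiv.mul_apply, hε', map_mul, hε', hφdef, hεL, ← mul_assoc, ← sq, hε2]
      ring
  -- y is fixed by automorphisms fixing enough
  obtain ⟨k, hk⟩ : ∃ k, ∀ g : AlgebraicClosure K ≃ₐ[K] AlgebraicClosure K,
      (∀ x ∈ radGroup K 2, g (x : AlgebraicClosure K) = x) → (∀ j ≤ k, g (w j) = w j) →
      g y = y := by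
    clear hyL
    induction hy using IntermediateField.adjoin_induction with
    | mem x hx =>
      rcases hx with ⟨u, ⟨n, hu⟩, rfl⟩ | ⟨u, hu, rfl⟩
      · refine ⟨n, fun g _ hg => ?_⟩
        have hu' : (u : AlgebraicClosure K) ^ (2 ^ (n + 1)) = 1 := by
          rw [← Units.val_pow_eq_pow_val, pow_succ, pow_mul, hu]; simp
        obtain ⟨j, -, hj⟩ := (hwp n).eq_pow_of_pow_eq_one hu'
        rw [← hj, map_pow, hg n le_rfl]
      · exact ⟨0, fun g hg _ => hg u hu⟩
    | algebraMap x => exact ⟨0, fun g _ _ => by simp⟩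
    | add x y _ _ hx hy =>
      obtain ⟨a, ha⟩ := hx
      obtain ⟨b, hb⟩ := hy
      refine ⟨max a b, fun g h1 h2 => ?_⟩
      rw [map_add, ha g h1 (fun j hj => h2 j (le_max_of_le_left hj)),
        hb g h1 (fun j hj => h2 j (le_max_of_le_right hj))]
    | inv x _ hx =>
      obtain ⟨a, ha⟩ := hx
      exact ⟨a, fun g h1 h2 => by rw [map_inv₀, ha g h1 h2]⟩
    | mul x y _ _ hx hy =>
      obtain ⟨a, ha⟩ := hx
      obtain ⟨b, hb⟩ := hy
      refine ⟨max a b, fun g h1 h2 => ?_⟩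
      rw [map_mul, ha g h1 (fun j hj => h2 j (le_max_of_le_left hj)),
        hb g h1 (fun j hj => h2 j (le_max_of_le_right hj))]
  refine aux_mem_of_fixed K T y (aux_sep_cyclo K y hyL) (fun ρ hρ => ?_)
  have hstep : ∀ d, ∃ m : ℕ, ∀ j ≤ S + d, (σ ^ (2 * m)) (ρ (w j)) = w j := by
    intro d
    induction d with
    | zero =>
      refine ⟨0, fun j hj => ?_⟩
      rw [hρ _ (hT1 (j + 1) (by omega) _ (hwp j))]; simp
    | succ d ih =>
      obtain ⟨m, hm⟩ := ih
      have h1 : ((σ ^ (2 * m)) (ρ (w (S + (d + 1))))) ^ 2 = w (S + (d + 1)) ^ 2 := by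
        rw [← map_pow, ← map_pow, ← add_assoc, hw, hm _ le_rfl]
      rcases sq_eq_sq_iff_eq_or_eq_neg.1 h1 with h | h
      · refine ⟨m, fun j hj => ?_⟩
        rcases Nat.lt_or_ge (S + d) j with h' | h'
        · obtain rfl : j = S + (d + 1) := by omega
          exact h
        · exact hm j h'
      · refine ⟨2 ^ d + m, fun j hj => ?_⟩
        have e : σ ^ (2 * (2 ^ d + m)) = σ ^ (2 ^ (d + 1)) * σ ^ (2 * m) := by
          rw [← pow_add]; congr 1; ring
        rw [e, AlgEquiv.mul_apply]
        rcases Nat.lt_or_ge (S + d) j with h' | h'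
        · obtain rfl : j = S + (d + 1) := by omega
          rw [h, map_neg, hφ, neg_neg]
        · rw [hm j h']
          obtain ⟨l, hl⟩ : ∃ l, S + (d + 1) = j + (l + 1) := ⟨S + d - j, by omega⟩
          rw [← hwd (l + 1) j, ← hl, map_pow, hφ, Even.neg_pow]
          exact ⟨2 ^ l, by ring⟩
  obtain ⟨m, hm⟩ := hstep k
  have hfin := hk (σ ^ (2 * m) * ρ) ?_ ?_
  · rw [AlgEquiv.mul_apply] at hfin
    have : (σ ^ (2 * m)) (ρ y) = (σ ^ (2 * m)) y := by rw [hfin, hσnL _ _ hyL]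
    exact (σ ^ (2 * m)).injective this
  · intro x hx
    rw [AlgEquiv.mul_apply, hρ _ (hT2 x hx)]
    obtain ⟨a, ha⟩ := hx
    have h1 : σ (x : AlgebraicClosure K) ^ 2 = (x : AlgebraicClosure K) ^ 2 := by
      rw [← map_pow, ← ha]; simp
    have h2 : σ (σ (x : AlgebraicClosure K)) = x := by
      rcases sq_eq_sq_iff_eq_or_eq_neg.1 h1 with h | h
      · rw [h, h]
      · rw [h, map_neg, h, neg_neg]
    clear hm
    induction m with
    | zero => simp
    | succ m ih =>
      rw [mul_add, pow_add, AlgEquiv.mul_apply, mul_one, sq, AlgEquiv.mul_apply, h2, ih]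
  · intro j hj
    rw [AlgEquiv.mul_apply]
    exact hm j (by omega)

lemma aux_mu_prim (K : Type*) [Field K] (x : (AlgebraicClosure K)ˣ) (hx : x ∈ auxMu K) :
    ∃ m, IsPrimitiveRoot (x : AlgebraicClosure K) (2 ^ m) := by
  obtain ⟨n, hn⟩ := hx
  obtain ⟨m, -, hm⟩ := (Nat.dvd_prime_pow Nat.prime_two).1 (orderOf_dvd_of_pow_eq_one hn)
  refine ⟨m, ?_⟩
  rw [← hm, ← orderOf_units]
  exact IsPrimitiveRoot.orderOf _

/-- Equations (6.3) and (6.4) in the proof of Theorem 1.2: let `char K ≠ 2`, `ζ₄ ∉ K`, and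
let `s` be the largest element of `ℕ ∪ {∞}` such that `ζ_{2^s} ∈ K(ζ_{2𝒫})`. Then
`K(ζ_{2𝒫}) ∩ √[2^∞]{K^×} ⊆ ⟨ζ_{2^{s+1}}, √{K^×}⟩` and
`K(ζ_{2𝒫}) ∩ K(√[2^∞]{K^×}) ⊆ K(ζ_{2^{s+1}}, √{K^×})`. -/
theorem stmt19 (K : Type*) [Field K] (hchar : ringChar K ≠ 2)
    (h4 : ¬ ∃ z : K, IsPrimitiveRoot z 4)
    (s : ℕ∞)
    (hsin : ∀ n : ℕ, (n : ℕ∞) ≤ s → ∀ x : AlgebraicClosure K,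
      IsPrimitiveRoot x (2 ^ n) → x ∈ cyclo2P K)
    (hsmax : ∀ n : ℕ, s < (n : ℕ∞) → ∀ x : AlgebraicClosure K,
      IsPrimitiveRoot x (2 ^ n) → x ∉ cyclo2P K) :
    unitsIn (cyclo2P K) ⊓ radInf K 2 ≤
      Subgroup.closure (pPowRootsUnits K 2 (s + 1)) ⊔ radGroup K 2 ∧
    cyclo2P K ⊓
        IntermediateField.adjoin K (Units.val '' (radInf K 2 : Set (AlgebraicClosure K)ˣ)) ≤
      IntermediateField.adjoin K (pPowRoots K 2 (s + 1) ∪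
        Units.val '' (radGroup K 2 : Set (AlgebraicClosure K)ˣ)) := by
  refine ⟨?_, ?_⟩
  · rintro x ⟨hxL, hxR⟩
    have hxL' : (x : AlgebraicClosure K) ∈ cyclo2P K := hxL
    obtain ⟨ξ, hξ, w, ⟨a, ha⟩, hxw⟩ := aux_key K hchar h4 x hxR
      (fun g h => aux_comm_cyclo K x hxL' g h)
    rw [hxw]
    refine Subgroup.mul_mem_sup (Subgroup.subset_closure ?_) ⟨a, ha⟩
    obtain ⟨m, hm⟩ := aux_mu_prim K ξ hξ
    refine ⟨m, ?_, hm⟩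
    cases m with
    | zero => simp
    | succ m =>
      push_cast
      gcongr
      by_contra hlt
      push Not at hlt
      refine hsmax m hlt ((ξ : AlgebraicClosure K) ^ 2)
        (hm.pow (by positivity) (by rw [pow_succ, mul_comm])) ?_
      have : (ξ : AlgebraicClosure K) ^ 2 =
          (x : AlgebraicClosure K) ^ 2 * (algebraMap K (AlgebraicClosure K) a)⁻¹ := by
        have hw0 := w.ne_zero
        rw [ha, hxw, Units.val_mul]
        field_simp
      rw [this]
      exact mul_mem (pow_mem hxL' 2) (inv_mem (IntermediateField.algebraMap_mem _ a))
  · rintro y ⟨hyL, hyM⟩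
    have hyN := aux_B K hchar h4 y hyL hyM
    induction s using ENat.recTopCoe with
    | top =>
      refine IntermediateField.adjoin.mono _ _ _ (Set.union_subset_union_left _ ?_) hyN
      rintro _ ⟨u, hu, rfl⟩
      obtain ⟨m, hm⟩ := aux_mu_prim K u hu
      exact ⟨m, by simp, hm⟩
    | coe S =>
      refine aux_C K hchar S (fun n hn => hsin n (by exact_mod_cast hn))
        (fun n hn => hsmax n (by exact_mod_cast hn)) y hyL hyN _ ?_ ?_
      · intro n hn x hx
        exact IntermediateField.subset_adjoin _ _ (Or.inl ⟨n, by exact_mod_cast hn, hx⟩)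
      · intro x hx
        exact IntermediateField.subset_adjoin _ _ (Or.inr ⟨x, hx, rfl⟩)

end
end
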